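/- arXiv:math/9911215 — 4 statements merged into one kernel-verified Lean document; each statement's English description precedes it below -/
import Mathlib

section
/- Let E be a finite-dimensional real normed vector space, let μ : [c,d] → E be absolutely continuous, and let σ : [a,b] → [c,d] be absolutely continuous, nondecreasing and surjective. Then γ = μ ∘ σ is absolutely continuous and, for almost every t ∈ [a,b], either σ'(t) = 0 and γ'(t) = 0, or μ is differentiable at σ(t) and γ'(t) = μ'(σ(t)) σ'(t). -/
/-!
The derivative of `γ = μ ∘ σ` is `t ↦ σ' t • μ' (σ t)`. Everything follows from one fact about
measures: the image under `σ` of the measure `σ' dt` on `[a,b]` is Lebesgue measure on `[c,d]`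
(`map_withDensity_eq`). Both measures are finite, and they agree on half-lines: for `x ∈ [c,d]`,
`{t ∈ [a,b] | σ t ≤ x}` is an interval `[a,t₀]` with `σ t₀ = x`, whose `σ' dt`-measure is
`σ t₀ - σ a = x - c`.

Changing variables along this image measure turns `μ (σ t) - μ (σ a) = ∫_{σ a}^{σ t} μ'` into
`∫_a^t σ' • (μ' ∘ σ)`; the set where `σ s ≤ σ t` and `t < s` lies in a fibre of `σ`, which is
`σ' dt`-null since points are Lebesgue null.

For the pointwise statement, `μ` has derivative `μ' y` at almost every `y ∈ [c,d]` by Lebesgue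
differentiation. The `σ`-preimage of the exceptional null set is `σ' dt`-null, that is, `σ' = 0`
almost everywhere on it. No pointwise chain rule is needed.
-/

open Set MeasureTheory

/-- `f` is absolutely continuous on `[a,b]` with a.e. derivative `f'`: `f'` is integrable
on `[a,b]` and `f t = f a + ∫_a^t f'` for all `t ∈ [a,b]`. -/
def IsACOn {E : Type*} [NormedAddCommGroup E] [NormedSpace ℝ E]
    (f f' : ℝ → E) (a b : ℝ) : Prop :=
  IntegrableOn f' (Icc a b) ∧ ∀ t ∈ Icc a b, f t = f a + ∫ s in a..t, f' s

lemma IsACOn.ae_hasDerivWithinAt {E : Type*} [NormedAddCommGroup E] [NormedSpace ℝ E]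
    [CompleteSpace E] {f f' : ℝ → E} {a b : ℝ} (hab : a ≤ b) (hf : IsACOn f f' a b) :
    ∀ᵐ x ∂(volume.restrict (Icc a b)), HasDerivWithinAt f (f' x) (Icc a b) x := by
  have hi : IntervalIntegrable f' volume a b :=
    (intervalIntegrable_iff_integrableOn_Icc_of_le hab).2 hf.1
  rw [ae_restrict_iff' measurableSet_Icc]
  filter_upwards [hi.ae_hasDerivAt_integral] with x hx hxab
  rw [uIcc_of_le hab] at hx
  have h1 := ((hx hxab a (left_mem_Icc.2 hab)).const_add (f a)).hasDerivWithinAt (s := Icc a b)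
  exact h1.congr (fun y hy => hf.2 y hy) (hf.2 x hxab)

lemma IsACOn.ae_nonneg {σ σ' : ℝ → ℝ} {a b : ℝ} (hab : a ≤ b) (hσ : IsACOn σ σ' a b)
    (hmono : MonotoneOn σ (Icc a b)) : ∀ᵐ x ∂(volume.restrict (Icc a b)), 0 ≤ σ' x := by
  rcases hab.eq_or_lt with rfl | hlt
  · simp
  filter_upwards [hσ.ae_hasDerivWithinAt hab, ae_restrict_mem measurableSet_Icc] with x hx hxm
  rw [← hx.derivWithin (uniqueDiffOn_Icc hlt x hxm)]
  exact hmono.derivWithin_nonneg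

lemma IsACOn.continuousOn {E : Type*} [NormedAddCommGroup E] [NormedSpace ℝ E]
    {f f' : ℝ → E} {a b : ℝ} (hab : a ≤ b) (hf : IsACOn f f' a b) :
    ContinuousOn f (Icc a b) := by
  have h := intervalIntegral.continuousOn_primitive_interval (μ := volume) (f := f') (a := a)
    (b := b) (by rw [uIcc_of_le hab]; exact hf.1)
  rw [uIcc_of_le hab] at h
  exact (continuousOn_const.add h).congr (fun y hy => hf.2 y hy)

/-- The image of the measure `σ' dt` on `[a,b]` under `σ` is Lebesgue measure on `[c,d]`. The
measurable function `τ` stands for an extension of `σ` to the whole line. -/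
lemma map_withDensity_eq {a b c d : ℝ} (hab : a ≤ b) (hcd : c ≤ d)
    {σ σ' τ : ℝ → ℝ} (hσ : IsACOn σ σ' a b) (hmono : MonotoneOn σ (Icc a b))
    (hmaps : MapsTo σ (Icc a b) (Icc c d)) (hsurj : SurjOn σ (Icc a b) (Icc c d))
    (hτ : Measurable τ) (hτσ : EqOn τ σ (Icc a b)) :
    ((volume.restrict (Icc a b)).withDensity (fun t => ENNReal.ofReal (σ' t))).map τ
      = volume.restrict (Icc c d) := by
  have hσa : σ a = c := by
    obtain ⟨t, ht, htc⟩ := hsurj (left_mem_Icc.2 hcd)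
    exact le_antisymm (htc ▸ hmono (left_mem_Icc.2 hab) ht ht.1) (hmaps (left_mem_Icc.2 hab)).1
  have hcont := hσ.continuousOn hab
  -- The mass of an initial interval, by the fundamental theorem of calculus.
  have hmass : ∀ t ∈ Icc a b,
      ((volume.restrict (Icc a b)).withDensity (fun t => ENNReal.ofReal (σ' t))) (Icc a t)
        = ENNReal.ofReal (σ t - c) := by
    intro t ht
    have hsub : Icc a t ⊆ Icc a b := Icc_subset_Icc_right ht.2
    rw [withDensity_apply _ measurableSet_Icc, Measure.restrict_restrict measurableSet_Icc,
      inter_eq_left.2 hsub, ← ofReal_integral_eq_lintegral_ofReal (hσ.1.mono_set hsub)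
        (ae_restrict_of_ae_restrict_of_subset hsub (hσ.ae_nonneg hab hmono)),
      integral_Icc_eq_integral_Ioc, ← intervalIntegral.integral_of_le ht.1, hσ.2 t ht, hσa]
    congr 1; ring
  symm
  refine Measure.ext_of_Iic _ _ fun x => ?_
  rw [Measure.map_apply hτ measurableSet_Iic, Measure.restrict_apply measurableSet_Iic]
  set ρ := (volume.restrict (Icc a b)).withDensity (fun t => ENNReal.ofReal (σ' t)) with hρ
  have hρae : ∀ᵐ t ∂ρ, t ∈ Icc a b :=
    (withDensity_absolutelyContinuous _ _).ae_le (ae_restrict_mem measurableSet_Icc)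
  rcases lt_or_ge x c with hxc | hxc
  · have h1 : Iic x ∩ Icc c d = ∅ := by
      ext y; simp only [mem_inter_iff, mem_Iic, mem_Icc, mem_empty_iff_false, iff_false]
      intro h; linarith [h.1, h.2.1]
    rw [h1, measure_empty]
    symm
    rw [measure_eq_zero_iff_ae_notMem]
    filter_upwards [hρae] with t ht h
    have h2 : τ t ≤ x := h
    rw [hτσ ht] at h2
    linarith [(hmaps ht).1]
  · set T := Icc a b ∩ σ ⁻¹' Iic x
    have hTc : IsCompact T :=
      isCompact_Icc.of_isClosed_subset
        (hcont.preimage_isClosed_of_isClosed isClosed_Icc isClosed_Iic) inter_subset_left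
    obtain ⟨t₀, ⟨ht₀, ht₀x⟩, hmax⟩ := hTc.exists_isGreatest
      ⟨a, left_mem_Icc.2 hab, by simpa [hσa] using hxc⟩
    have h1 : Iic x ∩ Icc c d = Icc c (min x d) := by
      ext y; simp only [mem_inter_iff, mem_Iic, mem_Icc, le_min_iff]; tauto
    have h2 : σ t₀ = min x d := by
      refine le_antisymm (le_min ht₀x (hmaps ht₀).2) ?_
      obtain ⟨s, hs, hsx⟩ := hsurj (show min x d ∈ Icc c d from
        ⟨le_min hxc hcd, min_le_right _ _⟩)
      rw [← hsx]
      exact hmono hs ht₀ (hmax ⟨hs, by simp [hsx]⟩)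
    have h3 : ρ (τ ⁻¹' Iic x) = ρ (Icc a t₀) := by
      refine measure_congr ?_
      filter_upwards [hρae] with s hs
      refine propext ⟨fun h => ⟨hs.1, hmax ⟨hs, ?_⟩⟩, fun h => ?_⟩
      · have h' : τ s ≤ x := h
        rwa [hτσ hs] at h'
      · change τ s ≤ x
        rw [hτσ hs]
        exact (hmono hs ht₀ h.2).trans ht₀x
    rw [h1, h3, hmass t₀ ht₀, Real.volume_Icc, h2]

/-- A.e. chain rule from Appendix A: if `μ : [c,d] → E` is absolutely continuous and
`σ : [a,b] → [c,d]` is absolutely continuous, nondecreasing and surjective, then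
`γ = μ ∘ σ` is absolutely continuous and, for a.e. `t ∈ [a,b]`, either `σ'(t) = 0` and
`γ'(t) = 0`, or `μ` is differentiable at `σ(t)` and `γ'(t) = μ'(σ(t)) σ'(t)`. -/
theorem stmt_12 {E : Type*} [NormedAddCommGroup E] [NormedSpace ℝ E]
    [FiniteDimensional ℝ E] {a b c d : ℝ} (hab : a ≤ b) (hcd : c ≤ d)
    (μ μ' : ℝ → E) (hμ : IsACOn μ μ' c d)
    (σ σ' : ℝ → ℝ) (hσ : IsACOn σ σ' a b) (hmono : MonotoneOn σ (Icc a b))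
    (hmaps : MapsTo σ (Icc a b) (Icc c d)) (hsurj : SurjOn σ (Icc a b) (Icc c d)) :
    ∃ γ' : ℝ → E, IsACOn (fun t => μ (σ t)) γ' a b ∧
      ∀ᵐ t ∂(volume.restrict (Icc a b)),
        (σ' t = 0 ∧ γ' t = 0) ∨
        (∃ m : E, HasDerivWithinAt μ m (Icc c d) (σ t) ∧ γ' t = σ' t • m) := by
  -- Extending `σ` by constants gives a monotone, hence measurable, function on the line.
  set τ : ℝ → ℝ := IccExtend hab ((Icc a b).domRestrict σ) with hτdef
  have hτσ : EqOn τ σ (Icc a b) := fun t ht => by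
    rw [hτdef, IccExtend_of_mem hab _ ht]; rfl
  have hτ : Measurable τ := by
    refine Monotone.measurable (Monotone.IccExtend hab ?_)
    exact fun x y hxy => hmono x.2 y.2 hxy
  have hmap := map_withDensity_eq hab hcd hσ hmono hmaps hsurj hτ hτσ
  set ρ := (volume.restrict (Icc a b)).withDensity (fun t => ENNReal.ofReal (σ' t)) with hρ
  have hdm : AEMeasurable (fun t => ENNReal.ofReal (σ' t)) (volume.restrict (Icc a b)) :=
    hσ.1.aestronglyMeasurable.aemeasurable.ennreal_ofReal
  have hfin : ∀ᵐ t ∂(volume.restrict (Icc a b)), ENNReal.ofReal (σ' t) < ⊤ :=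
    Filter.Eventually.of_forall fun _ => ENNReal.ofReal_lt_top
  have hnn := hσ.ae_nonneg hab hmono
  have hρae : ∀ᵐ t ∂ρ, t ∈ Icc a b :=
    (withDensity_absolutelyContinuous _ _).ae_le (ae_restrict_mem measurableSet_Icc)
  -- Null sets of `[c,d]` pull back to `ρ`-null sets.
  have hpull : ∀ p : ℝ → Prop, (∀ᵐ y ∂(volume.restrict (Icc c d)), p y) →
      ∀ᵐ t ∂ρ, p (τ t) := by
    intro p hp
    rw [← hmap] at hp
    exact ae_of_ae_map hτ.aemeasurable hp
  refine ⟨fun t => σ' t • μ' (τ t), ⟨?_, ?_⟩, ?_⟩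
  · have h1 : Integrable (fun t => μ' (τ t)) ρ := by
      have h := hμ.1
      rw [IntegrableOn, ← hmap] at h
      exact (integrable_map_measure h.aestronglyMeasurable hτ.aemeasurable).1 h
    rw [hρ, integrable_withDensity_iff_integrable_smul₀' hdm hfin] at h1
    refine h1.congr ?_
    filter_upwards [hnn] with t ht
    simp only [ENNReal.toReal_ofReal ht]
  · intro t ht
    have hii : ∀ y ∈ Icc c d, IntervalIntegrable μ' volume c y := fun y hy =>
      (intervalIntegrable_iff_integrableOn_Icc_of_le hy.1).2
        (hμ.1.mono_set (Icc_subset_Icc_right hy.2))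
    have ha : a ∈ Icc a b := left_mem_Icc.2 hab
    have hσa : σ a = c := by
      obtain ⟨s, hs, hsc⟩ := hsurj (left_mem_Icc.2 hcd)
      exact le_antisymm (hsc ▸ hmono ha hs hs.1) (hmaps ha).1
    have hσt := hmaps ht
    change μ (σ t) = μ (σ a) + _
    rw [hσa, hμ.2 _ hσt]
    congr 1
    have hfib : ∀ᵐ s ∂ρ, τ s ≠ σ t := hpull (fun y => y ≠ σ t)
      (ae_restrict_of_ae (by simp [ae_iff, measure_singleton]))
    calc ∫ y in c..σ t, μ' y
        = ∫ y in Icc c d, (Iic (σ t)).indicator μ' y := by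
          rw [intervalIntegral.integral_of_le hσt.1, ← integral_Icc_eq_integral_Ioc,
            setIntegral_indicator measurableSet_Iic]
          congr 2
          ext y; simp only [mem_inter_iff, mem_Iic, mem_Icc]
          exact ⟨fun h => ⟨⟨h.1, h.2.trans hσt.2⟩, h.2⟩, fun h => ⟨h.1.1, h.2⟩⟩
      _ = ∫ s, (Iic (σ t)).indicator μ' (τ s) ∂ρ := by
          have h := (hμ.1.indicator (measurableSet_Iic (a := σ t))).aestronglyMeasurable
          rw [← hmap] at h ⊢
          exact integral_map hτ.aemeasurable h
      _ = ∫ s, (Iic t).indicator (fun s => μ' (τ s)) s ∂ρ := by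
          refine integral_congr_ae ?_
          filter_upwards [hρae, hfib] with s hs hne
          have hiff : τ s ∈ Iic (σ t) ↔ s ∈ Iic t := by
            simp only [mem_Iic]
            rw [hτσ hs] at hne ⊢
            refine ⟨fun h => ?_, fun h => hmono hs ht h⟩
            by_contra! hlt
            exact hne (le_antisymm h (hmono ht hs hlt.le))
          by_cases h : s ∈ Iic t
          · rw [indicator_of_mem h, indicator_of_mem (hiff.2 h)]
          · rw [indicator_of_notMem h, indicator_of_notMem (fun h' => h (hiff.1 h'))]
      _ = ∫ s in Icc a b, (Iic t).indicator (fun s => σ' s • μ' (τ s)) s := by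
          rw [hρ, integral_withDensity_eq_integral_toReal_smul₀ hdm hfin]
          refine integral_congr_ae ?_
          filter_upwards [hnn] with s hs
          rw [ENNReal.toReal_ofReal hs]
          by_cases h : s ∈ Iic t <;> simp [h]
      _ = ∫ s in a..t, σ' s • μ' (τ s) := by
          rw [intervalIntegral.integral_of_le ht.1, ← integral_Icc_eq_integral_Ioc,
            setIntegral_indicator measurableSet_Iic]
          congr 2
          ext y; simp only [mem_inter_iff, mem_Iic, mem_Icc]
          exact ⟨fun h => ⟨h.1.1, h.2⟩, fun h => ⟨⟨h.1, h.2.trans ht.2⟩, h.2⟩⟩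
  · have h1 := hpull _ (hμ.ae_hasDerivWithinAt hcd)
    rw [hρ, ae_withDensity_iff' hdm] at h1
    filter_upwards [h1, hnn, ae_restrict_mem measurableSet_Icc] with t h hpos ht
    by_cases h0 : σ' t = 0
    · left; simp [h0]
    · right
      have h2 := h (by simpa using lt_of_le_of_ne hpos (Ne.symm h0))
      rw [hτσ ht] at h2 ⊢
      exact ⟨_, h2, rfl⟩
end

section
/- Let D be a distribution on ℝⁿ, let μ : [c,d] → ℝⁿ be absolutely continuous and let σ : [a,b] → [c,d] be absolutely continuous, nondecreasing and surjective, such that the composition γ = μ ∘ σ is horizontal, i.e., γ'(t) ∈ D(γ(t)) for almost every t ∈ [a,b]. Then μ is horizontal, i.e., μ'(s) ∈ D(μ(s)) for almost every s ∈ [c,d]. -/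
/-!
Off a null set of `s ∈ [c,d]`, every preimage `t` of `s` under `σ` is a point at which `σ` and
`γ = μ ∘ σ` are differentiable with derivatives `σ' t ≠ 0` and `γ' t ∈ D (μ s)`, and `μ` is
differentiable at `s` with derivative `μ' s`. The chain rule gives `γ' t = σ' t • μ' s`, and
dividing by `σ' t` puts `μ' s` in the subspace `D (μ s)`.

The exceptional `s` form a null set for three reasons. Almost every point is a point of
differentiability of an absolutely continuous function (`IsACOn.ae_hasDerivAt`, from the Lebesgue
differentiation theorem). The bad `t` form a null set, and an absolutely continuous function maps
null sets to null sets (Luzin's property, `IsACOn.volume_image_eq_zero`). The critical values of `σ`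
form a null set (the one-dimensional Sard lemma, `volume_image_critical_eq_zero`).
-/

open Set MeasureTheory

theorem IsACOn.ae_hasDerivAt {E : Type*} [NormedAddCommGroup E] [NormedSpace ℝ E]
    [CompleteSpace E] {f f' : ℝ → E} {a b : ℝ} (hab : a ≤ b) (hf : IsACOn f f' a b) :
    ∀ᵐ t ∂(volume.restrict (Icc a b)), HasDerivAt f (f' t) t := by
  have hint : IntervalIntegrable f' volume a b :=
    (intervalIntegrable_iff_integrableOn_Icc_of_le hab).2 hf.1
  have h₁ : ∀ᵐ x : ℝ, x ≠ a := by simp [ae_iff, measure_singleton]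
  have h₂ : ∀ᵐ x : ℝ, x ≠ b := by simp [ae_iff, measure_singleton]
  rw [ae_restrict_iff' measurableSet_Icc]
  filter_upwards [hint.ae_hasDerivAt_integral, h₁, h₂] with x hx hxa hxb hxm
  rw [uIcc_of_le hab] at hx
  have hd := (hx hxm a ⟨le_rfl, hab⟩).const_add (f a)
  refine hd.congr_of_eventuallyEq ?_
  have hnhds : Icc a b ∈ nhds x :=
    Icc_mem_nhds (lt_of_le_of_ne hxm.1 (Ne.symm hxa)) (lt_of_le_of_ne hxm.2 hxb)
  filter_upwards [hnhds] with y hy using hf.2 y hy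

/-- Luzin's property (N) for absolutely continuous functions. The outer measure
`A ↦ volume (f '' (A ∩ [a,b]))` is at most `∫_u^v |f'|` on `(u,v]`, hence it is dominated by the
Stieltjes measure of the primitive of `|f'|`, which has a density with respect to `volume`. -/
theorem IsACOn.volume_image_eq_zero {f f' : ℝ → ℝ} {a b : ℝ} (hf : IsACOn f f' a b)
    {N : Set ℝ} (hN : volume N = 0) : volume (f '' (N ∩ Icc a b)) = 0 := by
  set p : ℝ → ℝ := (Icc a b).indicator (fun x => |f' x|) with hp
  have hpi : Integrable p := (integrable_indicator_iff measurableSet_Icc).2 hf.1.abs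
  have hp0 : ∀ x, 0 ≤ p x := fun x => indicator_nonneg (fun _ _ => abs_nonneg _) x
  have hpii : ∀ u v, IntervalIntegrable p volume u v := fun u v => hpi.intervalIntegrable
  have hsub : ∀ u v, (∫ x in (0:ℝ)..v, p x) - ∫ x in (0:ℝ)..u, p x = ∫ x in u..v, p x :=
    fun u v => intervalIntegral.integral_interval_sub_left (hpii _ _) (hpii _ _)
  let G : StieltjesFunction ℝ :=
    { toFun := fun t => ∫ x in (0:ℝ)..t, p x
      mono' := fun u v huv => by
        have := hsub u v
        have := intervalIntegral.integral_nonneg_of_forall (μ := volume) huv hp0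
        grind
      right_continuous' := fun x =>
        (intervalIntegral.continuous_primitive hpii 0).continuousWithinAt }
  have hG : ∀ u v, G v - G u = ∫ x in u..v, p x := hsub
  have hGm : G.measure = volume.withDensity (fun x => ENNReal.ofReal (p x)) := by
    refine Measure.ext_of_Ioc _ _ fun u v huv => ?_
    rw [G.measure_Ioc, withDensity_apply _ measurableSet_Ioc, hG,
      intervalIntegral.integral_of_le huv.le,
      ofReal_integral_eq_lintegral_ofReal hpi.integrableOn (Filter.Eventually.of_forall hp0)]
  have hGN : G.outer N = 0 := by
    have h : G.measure N = 0 := by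
      rw [hGm]; exact withDensity_absolutelyContinuous _ _ hN
    rw [StieltjesFunction.measure] at h
    exact h
  have hincr : ∀ x ∈ Icc a b, ∀ y ∈ Icc a b, x ≤ y → |f y - f x| ≤ ∫ t in x..y, p t := by
    intro x hx y hy hxy
    have hii : ∀ z ∈ Icc a b, IntervalIntegrable f' volume a z := fun z hz =>
      (intervalIntegrable_iff_integrableOn_Icc_of_le hz.1).2
        (hf.1.mono_set (Icc_subset_Icc_right hz.2))
    have e : f y - f x = ∫ t in x..y, f' t := by
      rw [hf.2 x hx, hf.2 y hy,
        ← intervalIntegral.integral_interval_sub_left (hii y hy) (hii x hx)]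
      ring
    rw [e]
    refine (intervalIntegral.abs_integral_le_integral_abs hxy).trans (le_of_eq ?_)
    refine intervalIntegral.integral_congr fun t ht => ?_
    rw [uIcc_of_le hxy] at ht
    simp only [hp]
    rw [indicator_of_mem (show t ∈ Icc a b from ⟨hx.1.trans ht.1, ht.2.trans hy.2⟩)]
  have key : OuterMeasure.restrict (Icc a b)
      (OuterMeasure.comap f (volume : Measure ℝ).toOuterMeasure) ≤ G.outer := by
    refine OuterMeasure.le_ofFunction.2 fun s => ?_
    rw [StieltjesFunction.length_eq]
    refine le_iInf fun u => le_iInf fun v => le_iInf fun hs => ?_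
    have hbot : (botSet : Set ℝ) = ∅ := by
      ext x; simp [botSet]
    rw [hbot, sdiff_empty] at hs
    rw [OuterMeasure.restrict_apply, OuterMeasure.comap_apply]
    refine (Real.volume_le_diam _).trans (Metric.ediam_le ?_)
    have hle : ∀ x ∈ s ∩ Icc a b, ∀ y ∈ s ∩ Icc a b, x ≤ y →
        edist (f x) (f y) ≤ ENNReal.ofReal (G v - G u) := by
      intro x hx y hy hxy
      rw [edist_dist, dist_comm, Real.dist_eq]
      refine ENNReal.ofReal_le_ofReal ((hincr x hx.2 y hy.2 hxy).trans ?_)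
      rw [← hG]
      have h1 := G.mono (hs hx.1).1.le
      have h2 := G.mono (hs hy.1).2
      linarith
    rintro _ ⟨x, hx, rfl⟩ _ ⟨y, hy, rfl⟩
    rcases le_total x y with h | h
    · exact hle x hx y hy h
    · rw [edist_comm]; exact hle y hy x hx h
  have := key N
  rw [hGN, OuterMeasure.restrict_apply, OuterMeasure.comap_apply] at this
  exact le_antisymm this (zero_le)

theorem volume_image_critical_eq_zero (f : ℝ → ℝ) :
    volume (f '' {t | HasDerivAt f 0 t}) = 0 := by
  refine addHaar_image_eq_zero_of_det_fderivWithin_eq_zero volume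
    (f' := fun _ => (0 : ℝ →L[ℝ] ℝ)) (fun x hx => ?_) (fun x _ => ?_)
  · have h : HasFDerivAt f (0 : ℝ →L[ℝ] ℝ) x := by
      simpa using (show HasDerivAt f 0 x from hx).hasFDerivAt
    exact h.hasFDerivWithinAt
  · simp [ContinuousLinearMap.det]

/-- Coordinate version of Lemma A.2: if `μ : [c,d] → ℝⁿ` is absolutely continuous and
admits a horizontal reparameterization `γ = μ ∘ σ` (with `σ : [a,b] → [c,d]` absolutely
continuous, nondecreasing and surjective), then `μ` itself is horizontal, i.e.
`μ'(s) ∈ D(μ(s))` for a.e. `s ∈ [c,d]`. -/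
theorem stmt_13 {n : ℕ} (D : (Fin n → ℝ) → Submodule ℝ (Fin n → ℝ))
    {a b c d : ℝ} (hab : a ≤ b) (hcd : c ≤ d)
    (μ μ' : ℝ → Fin n → ℝ) (hμ : IsACOn μ μ' c d)
    (σ σ' : ℝ → ℝ) (hσ : IsACOn σ σ' a b) (hmono : MonotoneOn σ (Icc a b))
    (hmaps : MapsTo σ (Icc a b) (Icc c d)) (hsurj : SurjOn σ (Icc a b) (Icc c d))
    (γ' : ℝ → Fin n → ℝ) (hγ : IsACOn (fun t => μ (σ t)) γ' a b)
    (hhor : ∀ᵐ t ∂(volume.restrict (Icc a b)), γ' t ∈ D (μ (σ t))) :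
    ∀ᵐ s ∂(volume.restrict (Icc c d)), μ' s ∈ D (μ s) := by
  -- The `t` at which differentiability of `σ` or `γ`, or horizontality of `γ`, fails.
  set N : Set ℝ := {t | ¬ (t ∈ Icc a b → HasDerivAt σ (σ' t) t ∧
    HasDerivAt (fun t => μ (σ t)) (γ' t) t ∧ γ' t ∈ D (μ (σ t)))} with hN
  have hN0 : volume N = 0 := by
    have h := (hσ.ae_hasDerivAt hab).and ((hγ.ae_hasDerivAt hab).and hhor)
    rw [ae_restrict_iff' measurableSet_Icc] at h
    exact ae_iff.1 h
  have hσN : ∀ᵐ s, s ∉ σ '' (N ∩ Icc a b) :=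
    measure_eq_zero_iff_ae_notMem.1 (hσ.volume_image_eq_zero hN0)
  have hσZ : ∀ᵐ s, s ∉ σ '' {t | HasDerivAt σ 0 t} :=
    measure_eq_zero_iff_ae_notMem.1 (volume_image_critical_eq_zero σ)
  have hμd := hμ.ae_hasDerivAt hcd
  rw [ae_restrict_iff' measurableSet_Icc] at hμd ⊢
  filter_upwards [hσN, hσZ, hμd] with s hsN hsZ hsd hs
  obtain ⟨t, ht, rfl⟩ := hsurj hs
  have htN : t ∉ N := fun h => hsN ⟨t, ⟨h, ht⟩, rfl⟩
  obtain ⟨h1, h2, h3⟩ := (not_not.1 htN) ht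
  have hne : σ' t ≠ 0 := fun h0 => hsZ ⟨t, by simpa [h0] using h1, rfl⟩
  have hchain : HasDerivAt (fun t => μ (σ t)) (σ' t • μ' (σ t)) t := (hsd hs).scomp t h1
  rw [h2.unique hchain] at h3
  exact ((D (μ (σ t))).smul_mem_iff hne).1 h3
end

section
/- Let D be a distribution on ℝⁿ, let g be a continuous Riemannian metric on ℝⁿ, and let P, Q ⊆ ℝⁿ be nonempty sets. Let C denote the set of absolutely continuous horizontal curves γ : [a,b] → ℝⁿ with γ(a) ∈ P and γ(b) ∈ Q and with t ↦ g(γ(t))(γ'(t),γ'(t)) integrable. Then a curve γ ∈ C satisfies E_g(γ) ≤ E_g(ρ) for all ρ ∈ C if and only if γ is affinely parameterized (i.e., g(γ(t))(γ'(t),γ'(t)) is a.e. constant) and ℓ_g(γ) ≤ ℓ_g(ρ) for all ρ ∈ C. -/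
/-!
Write `L` for length and `A = 2E = ∫ g(ρ',ρ')`. Cauchy-Schwarz gives `L(ρ)² ≤ (b - a) A(ρ)`, with
equality exactly when the speed is a.e. constant (`cauchy_schwarz_defect`). This at once shows that
an affinely parameterized length minimizer minimizes the action.

Conversely, the infimum of `(b - a) A` over reparametrizations of `ρ` on `[a,b]` is at most `L(ρ)²`
(`exists_small_action`). The reparametrization by arc length would attain it, but its change of
parameter need not be injective; using the density `√g(ρ',ρ') + ε` in place of `√g(ρ',ρ')`
makes it a homeomorphism that can be inverted by an honest change of variables (`exists_reparam`),
and yields `(b - a) A ≤ L (L + ε (b - a))`. Letting `ε → 0`, an action minimizer `γ` satisfies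
`(b - a) A(γ) ≤ L(ρ)²` for every competitor `ρ`. With `ρ = γ` this is equality in Cauchy-Schwarz,
hence constant speed; for general `ρ` it gives `L(γ)² ≤ (b - a) A(γ) ≤ L(ρ)²`.
-/

open Set MeasureTheory

/-- The value `g(x)(v,v)` of the quadratic form of the Riemannian metric `g` (given by
its matrix at each point) on the vector `v`. -/
def qf {n : ℕ} (g : (Fin n → ℝ) → Matrix (Fin n) (Fin n) ℝ)
    (x v : Fin n → ℝ) : ℝ :=
  ∑ i, v i * (g x).mulVec v i

/-- Membership in the class `C`: `ρ` (with a.e. derivative `ρ'`) is an absolutely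
continuous horizontal curve on `[a,b]` joining `P` to `Q`, with `g(ρ)(ρ',ρ')`
integrable. -/
def InC {n : ℕ} (D : (Fin n → ℝ) → Submodule ℝ (Fin n → ℝ))
    (g : (Fin n → ℝ) → Matrix (Fin n) (Fin n) ℝ)
    (P Q : Set (Fin n → ℝ)) (a b : ℝ) (ρ ρ' : ℝ → Fin n → ℝ) : Prop :=
  IsACOn ρ ρ' a b ∧ (∀ᵐ t ∂(volume.restrict (Icc a b)), ρ' t ∈ D (ρ t)) ∧
    ρ a ∈ P ∧ ρ b ∈ Q ∧ IntegrableOn (fun t => qf g (ρ t) (ρ' t)) (Icc a b)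
/-! ### Change of variables along an absolutely continuous homeomorphism -/

/-- Absolutely continuous change of variables. A locally integrable density `w > 0` which is `1`
outside `[a,b]` and has mass `b - a` on `[a,b]` is pushed to Lebesgue measure by the
homeomorphism `φ t = a + ∫_a^t w`; the order isomorphism `ψ` is the inverse of `φ`. -/
theorem exists_reparam {a b : ℝ} (w : ℝ → ℝ) (hpos : ∀ t, 0 < w t)
    (hint : ∀ c d, IntervalIntegrable w volume c d)
    (hlt : ∀ t < a, w t = 1) (hgt : ∀ t > b, w t = 1)
    (hM : ∫ t in a..b, w t = b - a) :
    ∃ ψ : ℝ ≃o ℝ, ψ a = a ∧ ψ b = b ∧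
      MeasurePreserving ψ volume (volume.withDensity fun t => ENNReal.ofReal (w t)) := by
  set φ : ℝ → ℝ := fun t => a + ∫ s in a..t, w s with hφ
  have hdiff : ∀ c d, φ d - φ c = ∫ s in c..d, w s := by
    intro c d
    simp only [hφ, add_sub_add_left_eq_sub]
    exact intervalIntegral.integral_interval_sub_left (hint _ _) (hint _ _)
  have hmono : StrictMono φ := by
    intro c d hcd
    have := intervalIntegral.intervalIntegral_pos_of_pos (hint c d) hpos hcd
    linarith [hdiff c d]
  have hcont : Continuous φ :=
    continuous_const.add (intervalIntegral.continuous_primitive hint a)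
  have hφa : φ a = a := by simp [hφ]
  have hφb : φ b = b := by simp [hφ, hM]
  have htop : ∀ t, b ≤ t → φ t = t := by
    intro t ht
    have h1 : ∫ s in b..t, w s = ∫ s in b..t, (1 : ℝ) := by
      rw [intervalIntegral.integral_of_le ht, intervalIntegral.integral_of_le ht]
      exact setIntegral_congr_fun measurableSet_Ioc fun s hs => hgt s hs.1
    have := hdiff b t
    rw [h1, intervalIntegral.integral_const, smul_eq_mul, mul_one] at this
    linarith
  have hbot : ∀ t, t ≤ a → φ t = t := by
    intro t ht
    have h1 : ∫ s in t..a, w s = ∫ s in t..a, (1 : ℝ) := by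
      rw [intervalIntegral.integral_of_le ht, intervalIntegral.integral_of_le ht,
        integral_Ioc_eq_integral_Ioo, integral_Ioc_eq_integral_Ioo]
      exact setIntegral_congr_fun measurableSet_Ioo fun s hs => hlt s hs.2
    have := hdiff t a
    rw [h1, intervalIntegral.integral_const, smul_eq_mul, mul_one] at this
    linarith
  have hsurj : Function.Surjective φ := by
    refine hcont.surjective ?_ ?_
    · refine Filter.tendsto_id.congr' ?_
      filter_upwards [Filter.eventually_ge_atTop b] with t ht using (htop t ht).symm
    · refine Filter.tendsto_id.congr' ?_
      filter_upwards [Filter.eventually_le_atBot a] with t ht using (hbot t ht).symm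
  set Φ : ℝ ≃o ℝ := hmono.orderIsoOfSurjective φ hsurj with hΦ
  have hΦφ : ∀ t, Φ t = φ t := fun t => rfl
  refine ⟨Φ.symm, ?_, ?_, ?_⟩
  · rw [OrderIso.symm_apply_eq, hΦφ, hφa]
  · rw [OrderIso.symm_apply_eq, hΦφ, hφb]
  · set μ := volume.withDensity fun t => ENNReal.ofReal (w t) with hμ
    have hΦm : Measurable Φ := Φ.continuous.measurable
    have hmap : volume = μ.map Φ := by
      refine Real.measure_ext_Ioo_rat fun p q => ?_
      rw [Measure.map_apply hΦm measurableSet_Ioo, OrderIso.preimage_Ioo, Real.volume_Ioo,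
        hμ, withDensity_apply _ measurableSet_Ioo]
      rcases le_total (p : ℝ) q with hpq | hpq
      · have hle : Φ.symm p ≤ Φ.symm q := Φ.symm.monotone hpq
        have hI := (intervalIntegrable_iff_integrableOn_Ioo_of_le hle).1
          (hint (Φ.symm p) (Φ.symm q))
        rw [← ofReal_integral_eq_lintegral_ofReal hI
          (Filter.Eventually.of_forall fun t => (hpos t).le),
          ← integral_Ioc_eq_integral_Ioo, ← intervalIntegral.integral_of_le hle, ← hdiff,
          ← hΦφ, ← hΦφ, OrderIso.apply_symm_apply, OrderIso.apply_symm_apply]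
      · have hle : Φ.symm q ≤ Φ.symm p := Φ.symm.monotone hpq
        rw [Ioo_eq_empty (not_lt.2 hle), ENNReal.ofReal_of_nonpos (by linarith)]
        simp
    refine ⟨Φ.symm.continuous.measurable, ?_⟩
    conv_lhs => rw [hmap]
    rw [Measure.map_map Φ.symm.continuous.measurable hΦm]
    have : (Φ.symm ∘ Φ : ℝ → ℝ) = id := by ext t; simp
    rw [this, Measure.map_id]

section Transport

variable {E : Type*} [NormedAddCommGroup E] [NormedSpace ℝ E] {w : ℝ → ℝ} {ψ : ℝ ≃o ℝ}

theorem restrict_reparam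
    (hψ : MeasurePreserving ψ volume (volume.withDensity fun t => ENNReal.ofReal (w t)))
    {s : Set ℝ} (hs : MeasurableSet s) :
    MeasurePreserving ψ (volume.restrict (ψ ⁻¹' s))
      ((volume.restrict s).withDensity fun t => ENNReal.ofReal (w t)) := by
  rw [← restrict_withDensity hs]
  exact hψ.restrict_preimage hs

theorem integrableOn_comp_reparam (hpos : ∀ t, 0 < w t) (hw : AEMeasurable w)
    (hψ : MeasurePreserving ψ volume (volume.withDensity fun t => ENNReal.ofReal (w t)))
    {s : Set ℝ} (hs : MeasurableSet s) (F : ℝ → E) :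
    IntegrableOn (fun t => F (ψ t)) (ψ ⁻¹' s) ↔ IntegrableOn (fun t => w t • F t) s := by
  have h1 := (restrict_reparam hψ hs).integrable_comp_emb
    ψ.toHomeomorph.measurableEmbedding (g := F)
  have h2 := integrable_withDensity_iff_integrable_smul₀' (μ := volume.restrict s)
    (f := fun t => ENNReal.ofReal (w t)) hw.restrict.ennreal_ofReal (by simp) (g := F)
  simp only [ENNReal.toReal_ofReal (hpos _).le] at h2
  exact h1.trans h2

theorem setIntegral_comp_reparam (hpos : ∀ t, 0 < w t) (hw : AEMeasurable w)
    (hψ : MeasurePreserving ψ volume (volume.withDensity fun t => ENNReal.ofReal (w t)))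
    {s : Set ℝ} (hs : MeasurableSet s) (F : ℝ → E) :
    ∫ t in ψ ⁻¹' s, F (ψ t) = ∫ t in s, w t • F t := by
  have h1 := (restrict_reparam hψ hs).integral_comp
    ψ.toHomeomorph.measurableEmbedding F
  have h2 := integral_withDensity_eq_integral_toReal_smul₀ (μ := volume.restrict s)
    (f := fun t => ENNReal.ofReal (w t)) hw.restrict.ennreal_ofReal (by simp) F
  simp only [ENNReal.toReal_ofReal (hpos _).le] at h2
  exact h1.trans h2

end Transport

/-! ### Reparametrization almost by arc length -/

theorem qf_nonneg {n : ℕ} {g : (Fin n → ℝ) → Matrix (Fin n) (Fin n) ℝ}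
    (hgp : ∀ x, (g x).PosDef) (x v : Fin n → ℝ) : 0 ≤ qf g x v := by
  have := (hgp x).posSemidef.dotProduct_mulVec_nonneg v
  simpa [qf, dotProduct] using this

theorem qf_smul {n : ℕ} (g : (Fin n → ℝ) → Matrix (Fin n) (Fin n) ℝ)
    (x v : Fin n → ℝ) (c : ℝ) : qf g x (c • v) = c ^ 2 * qf g x v := by
  simp only [qf, Matrix.mulVec_smul, Pi.smul_apply, smul_eq_mul, Finset.mul_sum]
  exact Finset.sum_congr rfl fun i _ => by ring

theorem integrableOn_sqrt {f : ℝ → ℝ} {a b : ℝ} (hf : IntegrableOn f (Icc a b))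
    (h0 : ∀ t, 0 ≤ f t) : IntegrableOn (fun t => √(f t)) (Icc a b) := by
  have h1 : IntegrableOn (fun _ : ℝ => (1 : ℝ)) (Icc a b) := by simp
  refine Integrable.mono' (h1.add hf)
    (Real.continuous_sqrt.comp_aestronglyMeasurable hf.aestronglyMeasurable) ?_
  refine Filter.Eventually.of_forall fun t => ?_
  rw [Real.norm_eq_abs, abs_of_nonneg (Real.sqrt_nonneg _)]
  simp only [Pi.add_apply]
  nlinarith [Real.sq_sqrt (h0 t), sq_nonneg (√(f t) - 1)]

/-- Reparametrizing `ρ` with speed proportional to `√g(ρ',ρ') + ε` instead of arc length keeps the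
change of parameter invertible where `ρ' = 0`, at a cost in action that vanishes with `ε`. -/
theorem exists_small_action {n : ℕ} {a b : ℝ} (hab : a < b)
    {D : (Fin n → ℝ) → Submodule ℝ (Fin n → ℝ)}
    {g : (Fin n → ℝ) → Matrix (Fin n) (Fin n) ℝ} (hgp : ∀ x, (g x).PosDef)
    {P Q : Set (Fin n → ℝ)} {ρ ρ' : ℝ → Fin n → ℝ} (hρ : InC D g P Q a b ρ ρ')
    {ε : ℝ} (hε : 0 < ε) :
    ∃ σ σ' : ℝ → Fin n → ℝ, InC D g P Q a b σ σ' ∧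
      (b - a) * ∫ t in a..b, qf g (σ t) (σ' t) ≤
        ((∫ t in a..b, √(qf g (ρ t) (ρ' t))) + ε * (b - a)) *
          ∫ t in a..b, √(qf g (ρ t) (ρ' t)) := by
  obtain ⟨⟨hI, hAC⟩, hD, hPa, hQb, hq⟩ := hρ
  set v : ℝ → ℝ := fun t => √(qf g (ρ t) (ρ' t)) with hv
  have hv0 : ∀ t, 0 ≤ v t := fun t => Real.sqrt_nonneg _
  have hv2 : ∀ t, qf g (ρ t) (ρ' t) = v t ^ 2 := fun t =>
    (Real.sq_sqrt (qf_nonneg hgp _ _)).symm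
  have hvI : IntegrableOn v (Icc a b) := integrableOn_sqrt hq fun t => qf_nonneg hgp _ _
  have hvII : IntervalIntegrable v volume a b :=
    (intervalIntegrable_iff_integrableOn_Icc_of_le hab.le).2 hvI
  set L := ∫ t in a..b, v t with hL
  have hL0 : 0 ≤ L := intervalIntegral.integral_nonneg hab.le fun t _ => hv0 t
  have hba : 0 < b - a := sub_pos.2 hab
  set M := L + ε * (b - a) with hMdef
  have hM0 : 0 < M := by positivity
  set k := (b - a) / M with hk
  have hk0 : 0 < k := by positivity
  set w : ℝ → ℝ := fun t => 1 + (Icc a b).indicator (fun t => k * (v t + ε) - 1) t with hw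
  have hwin : ∀ t ∈ Icc a b, w t = k * (v t + ε) := fun t ht => by
    simp [hw, indicator_of_mem ht]
  have hwout : ∀ t, t ∉ Icc a b → w t = 1 := fun t ht => by
    simp [hw, indicator_of_notMem ht]
  have hpos : ∀ t, 0 < w t := by
    intro t
    by_cases ht : t ∈ Icc a b
    · rw [hwin t ht]
      have := hv0 t
      positivity
    · rw [hwout t ht]; exact one_pos
  have hin : IntegrableOn (fun t => k * (v t + ε) - 1) (Icc a b) :=
    ((hvI.add (by simp : IntegrableOn (fun _ : ℝ => ε) (Icc a b))).const_mul k).sub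
      (integrable_const 1)
  have hind := hin.integrable_indicator measurableSet_Icc
  have hwm : AEMeasurable w := aemeasurable_const.add hind.aemeasurable
  have hint : ∀ c d, IntervalIntegrable w volume c d := fun c d =>
    intervalIntegrable_const.add hind.intervalIntegrable
  -- The scaling `k` is chosen so that `w` has mass `b - a`, and the interval `[a,b]` is preserved.
  have hmass : ∫ t in a..b, w t = b - a := by
    have h1 : ∫ t in a..b, w t = ∫ t in a..b, k * (v t + ε) := by
      refine intervalIntegral.integral_congr fun t ht => ?_
      rw [uIcc_of_le hab.le] at ht
      exact hwin t ht
    rw [h1, intervalIntegral.integral_const_mul,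
      intervalIntegral.integral_add hvII intervalIntegrable_const,
      intervalIntegral.integral_const, smul_eq_mul, ← hL, mul_comm (b - a) ε, ← hMdef, hk]
    field_simp
  obtain ⟨ψ, hψa, hψb, hψ⟩ := exists_reparam w hpos hint
    (fun t ht => hwout t fun h => absurd h.1 (not_le.2 ht))
    (fun t ht => hwout t fun h => absurd h.2 (not_le.2 ht)) hmass
  have hψsa : ψ.symm a = a := by rw [OrderIso.symm_apply_eq, hψa]
  have hψsb : ψ.symm b = b := by rw [OrderIso.symm_apply_eq, hψb]
  have hpre : ψ ⁻¹' (Icc a b) = Icc a b := by rw [OrderIso.preimage_Icc, hψsa, hψsb]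
  have hpreIoc : ∀ t, ψ ⁻¹' (Ioc a (ψ t)) = Ioc a t := fun t => by
    rw [OrderIso.preimage_Ioc, hψsa, OrderIso.symm_apply_apply]
  have hqσ : ∀ t, qf g (ρ t) ((w t)⁻¹ • ρ' t) = (w t)⁻¹ ^ 2 * v t ^ 2 := fun t => by
    rw [qf_smul, hv2]
  have hwq : ∀ t, w t • qf g (ρ t) ((w t)⁻¹ • ρ' t) = (w t)⁻¹ * v t ^ 2 := fun t => by
    rw [hqσ, smul_eq_mul]
    have := (hpos t).ne'
    field_simp
  -- The transported integrand `w · g(ρ'/w, ρ'/w) = v² / w` is at most `v / k`, as `v² ≤ v (v + ε)`.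
  have hbound : ∀ t ∈ Icc a b, (w t)⁻¹ * v t ^ 2 ≤ k⁻¹ * v t := by
    intro t ht
    rw [hwin t ht, mul_inv, mul_assoc]
    refine mul_le_mul_of_nonneg_left ?_ (inv_nonneg.2 hk0.le)
    have hvt := hv0 t
    rw [inv_mul_le_iff₀ (by positivity)]
    nlinarith [mul_nonneg hε.le hvt]
  have hwqI : IntegrableOn (fun t => (w t)⁻¹ * v t ^ 2) (Icc a b) := by
    refine Integrable.mono' (hvI.const_mul k⁻¹) ?_ ?_
    · exact (hwm.restrict.inv.mul (hvI.aemeasurable.pow_const 2)).aestronglyMeasurable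
    · filter_upwards [ae_restrict_mem measurableSet_Icc] with t ht
      have := hpos t
      rw [Real.norm_eq_abs, abs_of_nonneg (by positivity)]
      exact hbound t ht
  have hcancel : (fun t => w t • (w t)⁻¹ • ρ' t) = ρ' := by
    ext1 t
    rw [smul_smul, mul_inv_cancel₀ (hpos t).ne', one_smul]
  refine ⟨fun s => ρ (ψ s), fun s => (w (ψ s))⁻¹ • ρ' (ψ s), ⟨⟨?_, ?_⟩, ?_, ?_, ?_, ?_⟩, ?_⟩
  · have := integrableOn_comp_reparam hpos hwm hψ (measurableSet_Icc (a := a) (b := b))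
      (fun t => (w t)⁻¹ • ρ' t)
    rw [hpre, hcancel] at this
    exact this.2 hI
  · intro t ht
    have htψ : ψ t ∈ Icc a b := by
      have : t ∈ ψ ⁻¹' (Icc a b) := hpre.symm ▸ ht
      exact this
    have := setIntegral_comp_reparam hpos hwm hψ (measurableSet_Ioc (a := a) (b := ψ t))
      (fun t => (w t)⁻¹ • ρ' t)
    rw [hpreIoc, hcancel] at this
    simp only [hψa]
    rw [intervalIntegral.integral_of_le ht.1, this, hAC _ htψ,
      intervalIntegral.integral_of_le htψ.1]
  · have hr := restrict_reparam hψ (measurableSet_Icc (a := a) (b := b))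
    rw [hpre] at hr
    have hD' := hr.quasiMeasurePreserving.ae ((withDensity_absolutelyContinuous _ _).ae_le hD)
    filter_upwards [hD'] with t ht
    exact (D _).smul_mem _ ht
  · simpa only [hψa] using hPa
  · simpa only [hψb] using hQb
  · have := integrableOn_comp_reparam hpos hwm hψ (measurableSet_Icc (a := a) (b := b))
      (fun t => qf g (ρ t) ((w t)⁻¹ • ρ' t))
    simp only [hpre, hwq] at this
    exact this.2 hwqI
  · have := setIntegral_comp_reparam hpos hwm hψ (measurableSet_Icc (a := a) (b := b))
      (fun t => qf g (ρ t) ((w t)⁻¹ • ρ' t))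
    simp only [hpre, hwq] at this
    rw [intervalIntegral.integral_of_le hab.le, ← integral_Icc_eq_integral_Ioc, this]
    have hle := setIntegral_mono_on hwqI (hvI.const_mul k⁻¹) measurableSet_Icc hbound
    rw [integral_const_mul, integral_Icc_eq_integral_Ioc (f := v),
      ← intervalIntegral.integral_of_le hab.le, ← hL] at hle
    calc (b - a) * ∫ t in Icc a b, (w t)⁻¹ * v t ^ 2
        ≤ (b - a) * (k⁻¹ * L) := mul_le_mul_of_nonneg_left hle hba.le
      _ = M * L := by rw [hk]; field_simp

/-! ### Length versus action -/

/-- The defect in the Cauchy-Schwarz inequality `(∫ v)² ≤ (b - a) ∫ v²` is `b - a` times the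
squared `L²` distance from `v` to its mean value. -/
theorem cauchy_schwarz_defect {a b : ℝ} (hab : a < b) {v : ℝ → ℝ}
    (hv : IntegrableOn v (Icc a b)) (hv2 : IntegrableOn (fun t => v t ^ 2) (Icc a b)) :
    IntegrableOn (fun t => (v t - (∫ s in a..b, v s) / (b - a)) ^ 2) (Icc a b) ∧
    (b - a) * (∫ t in a..b, (v t - (∫ s in a..b, v s) / (b - a)) ^ 2) =
      (b - a) * (∫ t in a..b, v t ^ 2) - (∫ t in a..b, v t) ^ 2 := by
  set L := ∫ s in a..b, v s with hL
  set m := L / (b - a) with hm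
  have hba : b - a ≠ 0 := (sub_pos.2 hab).ne'
  have hcI : IntegrableOn (fun _ : ℝ => m ^ 2) (Icc a b) := by simp
  have hexp : (fun t => (v t - m) ^ 2) = fun t => v t ^ 2 - 2 * m * v t + m ^ 2 := by
    ext t; ring
  rw [hexp]
  have hlin := hv.const_mul (2 * m)
  refine ⟨(hv2.sub hlin).add hcI, ?_⟩
  have toII : ∀ {f : ℝ → ℝ}, IntegrableOn f (Icc a b) → IntervalIntegrable f volume a b :=
    fun h => (intervalIntegrable_iff_integrableOn_Icc_of_le hab.le).2 h
  rw [intervalIntegral.integral_add ((toII hv2).sub (toII hlin)) (toII hcI),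
    intervalIntegral.integral_sub (toII hv2) (toII hlin), intervalIntegral.integral_const_mul,
    intervalIntegral.integral_const, smul_eq_mul, ← hL, hm]
  field_simp
  ring

/-- Coordinate version of Lemma 5.5: a curve `γ` in the class `C` of horizontal curves
joining `P` to `Q` minimizes the action `E_g` over `C` if and only if `γ` is affinely
parameterized and minimizes the length `ℓ_g` over `C`. -/
theorem stmt_16 {n : ℕ} {a b : ℝ} (hab : a ≤ b)
    (D : (Fin n → ℝ) → Submodule ℝ (Fin n → ℝ))
    (g : (Fin n → ℝ) → Matrix (Fin n) (Fin n) ℝ)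
    (hgc : Continuous g) (hgp : ∀ x, (g x).PosDef)
    (P Q : Set (Fin n → ℝ)) (hP : P.Nonempty) (hQ : Q.Nonempty)
    (γ γ' : ℝ → Fin n → ℝ) (hγ : InC D g P Q a b γ γ') :
    (∀ ρ ρ' : ℝ → Fin n → ℝ, InC D g P Q a b ρ ρ' →
        (1 / 2) * ∫ t in a..b, qf g (γ t) (γ' t) ≤
          (1 / 2) * ∫ t in a..b, qf g (ρ t) (ρ' t)) ↔
      ((∃ c : ℝ, ∀ᵐ t ∂(volume.restrict (Icc a b)), qf g (γ t) (γ' t) = c) ∧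
        ∀ ρ ρ' : ℝ → Fin n → ℝ, InC D g P Q a b ρ ρ' →
          (∫ t in a..b, Real.sqrt (qf g (γ t) (γ' t))) ≤
            ∫ t in a..b, Real.sqrt (qf g (ρ t) (ρ' t))) := by
  rcases hab.eq_or_lt with rfl | hlt
  · -- Over a degenerate interval all integrals vanish and almost every condition is void.
    simp
  have hba : 0 < b - a := sub_pos.2 hlt
  have hsq : ∀ ρ ρ' : ℝ → Fin n → ℝ, ∀ t,
      √(qf g (ρ t) (ρ' t)) ^ 2 = qf g (ρ t) (ρ' t) := fun ρ ρ' t =>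
    Real.sq_sqrt (qf_nonneg hgp _ _)
  have hCS : ∀ ρ ρ' : ℝ → Fin n → ℝ, InC D g P Q a b ρ ρ' →
      IntegrableOn (fun t => (√(qf g (ρ t) (ρ' t)) -
        (∫ s in a..b, √(qf g (ρ s) (ρ' s))) / (b - a)) ^ 2) (Icc a b) ∧
      (b - a) * (∫ t in a..b, (√(qf g (ρ t) (ρ' t)) -
        (∫ s in a..b, √(qf g (ρ s) (ρ' s))) / (b - a)) ^ 2) =
      (b - a) * (∫ t in a..b, qf g (ρ t) (ρ' t)) -
        (∫ t in a..b, √(qf g (ρ t) (ρ' t))) ^ 2 := by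
    intro ρ ρ' hρ
    have hq := hρ.2.2.2.2
    have := cauchy_schwarz_defect hlt (integrableOn_sqrt hq fun t => qf_nonneg hgp _ _)
      (by simpa only [hsq] using hq)
    simpa only [hsq] using this
  have hCSle : ∀ ρ ρ' : ℝ → Fin n → ℝ, InC D g P Q a b ρ ρ' →
      (∫ t in a..b, √(qf g (ρ t) (ρ' t))) ^ 2 ≤
        (b - a) * (∫ t in a..b, qf g (ρ t) (ρ' t)) := by
    intro ρ ρ' hρ
    have h1 := (hCS ρ ρ' hρ).2
    have h2 : 0 ≤ ∫ t in a..b, (√(qf g (ρ t) (ρ' t)) -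
        (∫ s in a..b, √(qf g (ρ s) (ρ' s))) / (b - a)) ^ 2 :=
      intervalIntegral.integral_nonneg hab fun t _ => sq_nonneg _
    nlinarith [mul_nonneg hba.le h2]
  have hL0 : ∀ ρ ρ' : ℝ → Fin n → ℝ, 0 ≤ ∫ t in a..b, √(qf g (ρ t) (ρ' t)) :=
    fun ρ ρ' => intervalIntegral.integral_nonneg hab fun t _ => Real.sqrt_nonneg _
  constructor
  · intro hmin
    have key : ∀ ρ ρ' : ℝ → Fin n → ℝ, InC D g P Q a b ρ ρ' →
        (b - a) * (∫ t in a..b, qf g (γ t) (γ' t)) ≤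
          (∫ t in a..b, √(qf g (ρ t) (ρ' t))) ^ 2 := by
      intro ρ ρ' hρ
      set L := ∫ t in a..b, √(qf g (ρ t) (ρ' t)) with hL
      have hstep : ∀ ε > 0, (b - a) * (∫ t in a..b, qf g (γ t) (γ' t)) ≤
          (L + ε * (b - a)) * L := by
        intro ε hε
        obtain ⟨σ, σ', hσ, hle⟩ := exists_small_action hlt hgp hρ hε
        have hγσ := hmin σ σ' hσ
        exact (mul_le_mul_of_nonneg_left (by linarith) hba.le).trans hle
      have hlim : Filter.Tendsto (fun ε : ℝ => (L + ε * (b - a)) * L) (nhdsWithin 0 (Ioi 0))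
          (nhds ((L + 0 * (b - a)) * L)) :=
        (Continuous.tendsto (by fun_prop) 0).mono_left nhdsWithin_le_nhds
      have := ge_of_tendsto hlim (by
        filter_upwards [self_mem_nhdsWithin] with ε hε using hstep ε hε)
      calc _ ≤ _ := this
        _ = L ^ 2 := by ring
    refine ⟨?_, fun ρ ρ' hρ => ?_⟩
    -- For `ρ = γ`, `key` forces the Cauchy-Schwarz defect of `γ` to vanish.
    · obtain ⟨hI, heq⟩ := hCS γ γ' hγ
      set m := (∫ s in a..b, √(qf g (γ s) (γ' s))) / (b - a) with hm
      have h0 : ∫ t in a..b, (√(qf g (γ t) (γ' t)) - m) ^ 2 = 0 := by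
        have h1 : 0 ≤ ∫ t in a..b, (√(qf g (γ t) (γ' t)) - m) ^ 2 :=
          intervalIntegral.integral_nonneg hab fun t _ => sq_nonneg _
        have h2 := key γ γ' hγ
        refine le_antisymm ?_ h1
        by_contra! h
        nlinarith [mul_pos hba h]
      rw [intervalIntegral.integral_of_le hab, ← integral_Icc_eq_integral_Ioc,
        integral_eq_zero_iff_of_nonneg (fun t => sq_nonneg _) hI] at h0
      refine ⟨m ^ 2, ?_⟩
      filter_upwards [h0] with t ht
      have hm' : √(qf g (γ t) (γ' t)) - m = 0 := pow_eq_zero_iff two_ne_zero |>.1 ht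
      rw [← hsq, sub_eq_zero.1 hm']
    · exact le_of_sq_le_sq ((hCSle γ γ' hγ).trans (key ρ ρ' hρ)) (hL0 ρ ρ')
  · rintro ⟨⟨c, hc⟩, hlen⟩ ρ ρ' hρ
    have hc0 : 0 ≤ c := by
      -- Since `a < b`, the a.e. constant value `c` is attained, hence nonnegative.
      have hne : volume.restrict (Icc a b) ≠ 0 := by
        simp [Measure.restrict_eq_zero, hlt]
      have := ae_neBot.2 hne
      obtain ⟨t, ht⟩ := hc.exists
      exact ht ▸ qf_nonneg hgp _ _
    have hE : ∫ t in a..b, qf g (γ t) (γ' t) = (b - a) * c := by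
      rw [intervalIntegral.integral_of_le hab, ← integral_Icc_eq_integral_Ioc,
        integral_congr_ae hc]
      simp [hab]
    have hLγ : ∫ t in a..b, √(qf g (γ t) (γ' t)) = (b - a) * √c := by
      rw [intervalIntegral.integral_of_le hab, ← integral_Icc_eq_integral_Ioc,
        integral_congr_ae (g := fun _ => √c) (by filter_upwards [hc] with t ht; rw [ht])]
      simp [hab]
    have h1 := hlen ρ ρ' hρ
    have h2 := hCSle ρ ρ' hρ
    have h3 := pow_le_pow_left₀ (hL0 γ γ') h1 2
    rw [hLγ, mul_pow, Real.sq_sqrt hc0] at h3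
    have h4 : (b - a) * ((b - a) * c) ≤ (b - a) * ∫ t in a..b, qf g (ρ t) (ρ' t) := by
      nlinarith
    rw [hE]
    linarith [le_of_mul_le_mul_left h4 hba]
end

section
/- Let g be a continuous Riemannian metric on ℝⁿ, let V ⊆ ℝⁿ be open and let x ∈ V. Then there exists r > 0 such that every absolutely continuous curve μ : [a,b] → ℝⁿ with μ(a) = x and ℓ_g(μ) < r satisfies μ([a,b]) ⊆ V. -/
/-!
On a compact set `K`, the continuous function `(y, v) ↦ √(g_y(v,v))` is bounded above and below
by positive constants on `K × (unit sphere)`, so by homogeneity the `g`-norm and the ambient norm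
are uniformly equivalent over `K` (`exists_gnorm_bounds`). Apply this with `K` a closed ball of
radius `ρ` about `x` inside `V`, with lower constant `c`, and take `r = c * ρ`. A curve that
leaves `V` has a first time `τ` at which its distance from `x` is at least `ρ`. Before `τ` it stays
in `K`, so its `g`-length is at least `c * ∫_a^τ ‖μ'‖ ≥ c * ‖μ τ - x‖ ≥ c * ρ`.
The upper bound, applied to the compact image of the curve, shows that the length integrand is
integrable (`integrableOn_gnorm`); otherwise the length integral could have the default value `0`.
-/

open Set MeasureTheory

lemma continuous_gnorm {n : ℕ} {g : (Fin n → ℝ) → Matrix (Fin n) (Fin n) ℝ}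
    (hgc : Continuous g) :
    Continuous fun p : (Fin n → ℝ) × (Fin n → ℝ) => Real.sqrt (qf g p.1 p.2) := by
  unfold qf
  refine Real.continuous_sqrt.comp (continuous_finsetSum _ fun i _ => ?_)
  have h1 : Continuous fun p : (Fin n → ℝ) × (Fin n → ℝ) => (g p.1).mulVec p.2 :=
    (hgc.comp continuous_fst).matrix_mulVec continuous_snd
  exact ((continuous_apply i).comp continuous_snd).mul ((continuous_apply i).comp h1)

lemma gnorm_smul {n : ℕ} (g : (Fin n → ℝ) → Matrix (Fin n) (Fin n) ℝ)
    (y v : Fin n → ℝ) {s : ℝ} (hs : 0 ≤ s) :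
    Real.sqrt (qf g y (s • v)) = s * Real.sqrt (qf g y v) := by
  have h : qf g y (s • v) = s ^ 2 * qf g y v := by
    simp only [qf, Matrix.mulVec_smul, Pi.smul_apply, smul_eq_mul, Finset.mul_sum]
    exact Finset.sum_congr rfl fun i _ => by ring
  rw [h, Real.sqrt_mul (sq_nonneg s), Real.sqrt_sq hs]

lemma gnorm_pos {n : ℕ} {g : (Fin n → ℝ) → Matrix (Fin n) (Fin n) ℝ}
    (hgp : ∀ x, (g x).PosDef) (y : Fin n → ℝ) {v : Fin n → ℝ} (hv : v ≠ 0) :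
    0 < Real.sqrt (qf g y v) := by
  have h := (hgp y).dotProduct_mulVec_pos hv
  exact Real.sqrt_pos.2 (by simpa [qf, dotProduct] using h)

/-- Over a compact set of base points, the `g`-norm and the ambient norm are uniformly
equivalent. -/
lemma exists_gnorm_bounds {n : ℕ} {g : (Fin n → ℝ) → Matrix (Fin n) (Fin n) ℝ}
    (hgc : Continuous g) (hgp : ∀ x, (g x).PosDef) {K : Set (Fin n → ℝ)} (hK : IsCompact K) :
    ∃ c > 0, ∃ C, ∀ y ∈ K, ∀ v, c * ‖v‖ ≤ Real.sqrt (qf g y v) ∧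
      Real.sqrt (qf g y v) ≤ C * ‖v‖ := by
  have hKS := hK.prod (isCompact_sphere (0 : Fin n → ℝ) 1)
  have hcont := (continuous_gnorm hgc).continuousOn (s := K ×ˢ Metric.sphere (0 : Fin n → ℝ) 1)
  obtain ⟨c, hc, hcb⟩ := hKS.exists_forall_le' hcont (a := 0) fun p hp =>
    gnorm_pos hgp p.1 (ne_zero_of_mem_unit_sphere ⟨p.2, hp.2⟩)
  obtain ⟨C, hC⟩ := hKS.bddAbove_image hcont
  refine ⟨c, hc, C, fun y hy v => ?_⟩
  rcases eq_or_ne v 0 with rfl | hv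
  · simp [qf]
  have hn : 0 < ‖v‖ := norm_pos_iff.2 hv
  have hu : (y, ‖v‖⁻¹ • v) ∈ K ×ˢ Metric.sphere (0 : Fin n → ℝ) 1 :=
    ⟨hy, by simp [norm_smul, hn.ne']⟩
  have e : Real.sqrt (qf g y v) = ‖v‖ * Real.sqrt (qf g y (‖v‖⁻¹ • v)) := by
    rw [← gnorm_smul g y _ hn.le, smul_inv_smul₀ hn.ne']
  have h1 := hcb _ hu
  have h2 := hC (mem_image_of_mem _ hu)
  rw [e, mul_comm c, mul_comm C]
  exact ⟨mul_le_mul_of_nonneg_left h1 hn.le, mul_le_mul_of_nonneg_left h2 hn.le⟩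

lemma IsACOn.continuousOn_s17 {n : ℕ} {μ μ' : ℝ → Fin n → ℝ} {a b : ℝ}
    (h : IsACOn μ μ' a b) : ContinuousOn μ (Icc a b) := by
  have h1 : ContinuousOn (fun t => μ a + ∫ s in Ioc a t, μ' s) (Icc a b) :=
    continuousOn_const.add (intervalIntegral.continuousOn_primitive h.1)
  refine h1.congr fun t ht => ?_
  rw [h.2 t ht, intervalIntegral.integral_of_le ht.1]

/-- The length integrand of an absolutely continuous curve is integrable. -/
lemma integrableOn_gnorm {n : ℕ} {g : (Fin n → ℝ) → Matrix (Fin n) (Fin n) ℝ}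
    (hgc : Continuous g) (hgp : ∀ x, (g x).PosDef) {μ μ' : ℝ → Fin n → ℝ} {a b : ℝ}
    (h : IsACOn μ μ' a b) :
    IntegrableOn (fun t => Real.sqrt (qf g (μ t) (μ' t))) (Icc a b) := by
  obtain ⟨_, _, C, hC⟩ := exists_gnorm_bounds hgc hgp (isCompact_Icc.image_of_continuousOn
    h.continuousOn_s17)
  refine Integrable.mono' (h.1.norm.const_mul C) ?_ ?_
  · exact (continuous_gnorm hgc).comp_aestronglyMeasurable
      ((h.continuousOn_s17.aestronglyMeasurable measurableSet_Icc).prodMk h.1.aestronglyMeasurable)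
  · filter_upwards [ae_restrict_mem measurableSet_Icc] with t ht
    rw [Real.norm_of_nonneg (Real.sqrt_nonneg _)]
    exact (hC _ (mem_image_of_mem _ ht) _).2

/-- Coordinate version of Lemma B.2: given an open set `V ⊆ ℝⁿ` and `x ∈ V`, there is
`r > 0` such that every absolutely continuous curve starting at `x` of `g`-length less
than `r` stays in `V`. -/
theorem stmt_17 {n : ℕ}
    (g : (Fin n → ℝ) → Matrix (Fin n) (Fin n) ℝ)
    (hgc : Continuous g) (hgp : ∀ x, (g x).PosDef)
    (V : Set (Fin n → ℝ)) (hV : IsOpen V) (x : Fin n → ℝ) (hx : x ∈ V) :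
    ∃ r > 0, ∀ (a b : ℝ), a ≤ b → ∀ μ μ' : ℝ → Fin n → ℝ,
      IsACOn μ μ' a b → μ a = x →
      (∫ t in a..b, Real.sqrt (qf g (μ t) (μ' t))) < r →
      ∀ t ∈ Icc a b, μ t ∈ V := by
  obtain ⟨ρ, hρ, hball⟩ := Metric.nhds_basis_closedBall.mem_iff.1 (hV.mem_nhds hx)
  obtain ⟨c, hc, _, hcb⟩ := exists_gnorm_bounds hgc hgp (isCompact_closedBall x ρ)
  refine ⟨c * ρ, mul_pos hc hρ, fun a b hab μ μ' hμ hμa hlen t ht => ?_⟩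
  by_contra hout
  have hcont : ContinuousOn (fun s => dist (μ s) x) (Icc a b) :=
    (continuous_id.dist continuous_const).comp_continuousOn hμ.continuousOn_s17
  -- `τ` is the first time at which the curve is at distance at least `ρ` from `x`.
  have hS : IsCompact (Icc a b ∩ (fun s => dist (μ s) x) ⁻¹' Ici ρ) :=
    isCompact_Icc.of_isClosed_subset (hcont.preimage_isClosed_of_isClosed isClosed_Icc isClosed_Ici)
      inter_subset_left
  have htS : t ∈ Icc a b ∩ (fun s => dist (μ s) x) ⁻¹' Ici ρ :=
    ⟨ht, le_of_not_ge fun h => hout (hball (Metric.mem_closedBall.2 h))⟩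
  obtain ⟨τ, ⟨hτ, hτρ⟩, hmin⟩ := hS.exists_isLeast ⟨t, htS⟩
  have hbefore : ∀ s ∈ Ioo a τ, μ s ∈ Metric.closedBall x ρ := fun s hs =>
    Metric.mem_closedBall.2 <| le_of_not_ge fun h => hs.2.not_ge (hmin ⟨⟨hs.1.le, hs.2.le.trans hτ.2⟩, h⟩)
  have hIL := integrableOn_gnorm hgc hgp hμ
  have hsub : Ioo a τ ⊆ Icc a b := fun s hs => ⟨hs.1.le, hs.2.le.trans hτ.2⟩
  have hlow : c * ∫ s in Ioo a τ, ‖μ' s‖ ≤ ∫ s in Ioo a τ, Real.sqrt (qf g (μ s) (μ' s)) := by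
    rw [← integral_const_mul]
    exact setIntegral_mono_on ((hμ.1.mono_set hsub).norm.const_mul c) (hIL.mono_set hsub)
      measurableSet_Ioo fun s hs => (hcb _ (hbefore s hs) _).1
  have hup : ∫ s in Ioo a τ, Real.sqrt (qf g (μ s) (μ' s)) ≤
      ∫ s in a..b, Real.sqrt (qf g (μ s) (μ' s)) := by
    rw [intervalIntegral.integral_of_le hab, ← integral_Icc_eq_integral_Ioc]
    exact setIntegral_mono_set hIL (Filter.Eventually.of_forall fun s => Real.sqrt_nonneg _)
      hsub.eventuallyLE
  have hdist : dist (μ τ) x ≤ ∫ s in Ioo a τ, ‖μ' s‖ := by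
    rw [dist_eq_norm, hμ.2 τ hτ, hμa, add_sub_cancel_left, intervalIntegral.integral_of_le hτ.1,
      integral_Ioc_eq_integral_Ioo]
    exact norm_integral_le_integral_norm _
  have hfar : c * ρ ≤ c * ∫ s in Ioo a τ, ‖μ' s‖ :=
    mul_le_mul_of_nonneg_left (le_trans hτρ hdist) hc.le
  linarith
end
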